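/- arXiv:2007.11300 — 2 statements merged into one kernel-verified Lean document; each statement's English description precedes it below -/
import Mathlib

section
/- Let 0 < γ < 1, fix x* > 1/(1−γ), and set M_{ν,γ}(x*) = max{ 2(ν+1+x*)/(2ν+1) , x*/((1−γ)x* − 1) }. Then for every ν > −1/2 and every x ≥ x*, ∫_0^x e^{−γt} t^ν I_ν(t) dt < M_{ν,γ}(x*) · e^{−γx} x^ν I_{ν+1}(x). -/
open Real MeasureTheory

/-- Modified Bessel function of the first kind, `I_ν(x) = ∑_{k} (x/2)^{ν+2k} / (Γ(ν+k+1) k!)`. -/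
noncomputable def besselI (ν x : ℝ) : ℝ :=
  ∑' k : ℕ, (x / 2) ^ (ν + 2 * (k : ℝ)) / (Real.Gamma (ν + (k : ℝ) + 1) * (Nat.factorial k : ℝ))

/-- Modified Bessel function of the second kind, `K_ν(x) = ∫_0^∞ e^{-x cosh t} cosh(ν t) dt`. -/
noncomputable def besselK (ν x : ℝ) : ℝ :=
  ∫ t in Set.Ioi (0 : ℝ), Real.exp (-x * Real.cosh t) * Real.cosh (ν * t)

/-- Lower incomplete gamma function `γ(a, x) = ∫_0^x t^{a-1} e^{-t} dt`. -/
noncomputable def lowerIncGamma (a x : ℝ) : ℝ :=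
  ∫ t in (0 : ℝ)..x, t ^ (a - 1) * Real.exp (-t)


noncomputable def bA (μ : ℝ) (k : ℕ) : ℝ := 1 / (Real.Gamma (μ + k + 1) * (Nat.factorial k : ℝ))

noncomputable def bG (μ y : ℝ) : ℝ := ∑' k : ℕ, bA μ k * y ^ k

lemma bA_pos {μ : ℝ} (hμ : -1 < μ) (k : ℕ) : 0 < bA μ k := by
  unfold bA
  have h0 : (0:ℝ) ≤ k := Nat.cast_nonneg k
  have : 0 < Real.Gamma (μ + k + 1) := Real.Gamma_pos_of_pos (by linarith)
  positivity

lemma bA_succ (μ : ℝ) (k : ℕ) : ((k:ℝ) + 1) * bA μ (k+1) = bA (μ+1) k := by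
  unfold bA
  have h : μ + ((k+1 : ℕ):ℝ) + 1 = μ + 1 + k + 1 := by push_cast; ring
  rw [h, Nat.factorial_succ]
  push_cast
  have h1 : ((k:ℝ)+1) ≠ 0 := by positivity
  have h2 : ((Nat.factorial k : ℕ):ℝ) ≠ 0 := by positivity
  by_cases h3 : Real.Gamma (μ + 1 + k + 1) = 0
  · simp [h3]
  field_simp

lemma bA_shift {μ : ℝ} (hμ : -1 < μ) (k : ℕ) : bA μ k = (μ + k + 1) * bA (μ+1) k := by
  unfold bA
  have h0 : (0:ℝ) ≤ k := Nat.cast_nonneg k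
  have hp : 0 < μ + k + 1 := by linarith
  have : 0 < Real.Gamma (μ + k + 1) := Real.Gamma_pos_of_pos hp
  have h : μ + 1 + (k:ℝ) + 1 = (μ + k + 1) + 1 := by ring
  rw [h, Real.Gamma_add_one hp.ne']
  have h2 : ((Nat.factorial k : ℕ):ℝ) ≠ 0 := by positivity
  field_simp

lemma bG_summable {μ : ℝ} (hμ : -1 < μ) (y : ℝ) : Summable (fun k : ℕ => bA μ k * y ^ k) := by
  have hb : ∀ k, |bA μ k * y ^ k| ≤ bA μ 0 * 0 + (1 / Real.Gamma (μ+1)) * 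
      ((|y| / (μ+1)) ^ k / (Nat.factorial k : ℝ)) := by
    intro k
    have hg : 0 < Real.Gamma (μ+1) := Real.Gamma_pos_of_pos (by linarith)
    have h1 : (0:ℝ) < μ + 1 := by linarith
    have key : Real.Gamma (μ+1) * (μ+1)^k ≤ Real.Gamma (μ + k + 1) := by
      induction k with
      | zero => simp
      | succ k ih =>
        have h0 : (0:ℝ) ≤ k := Nat.cast_nonneg k
        have h : μ + ((k+1 : ℕ):ℝ) + 1 = (μ + k + 1) + 1 := by push_cast; ring
        have hq : 0 < μ + k + 1 := by linarith
        rw [h, Real.Gamma_add_one (s := μ + k + 1) hq.ne', pow_succ]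
        have hp : 0 < Real.Gamma (μ + k + 1) := Real.Gamma_pos_of_pos (by linarith)
        calc Real.Gamma (μ+1) * ((μ+1)^k * (μ+1)) = (μ+1) * (Real.Gamma (μ+1) * (μ+1)^k) := by ring
          _ ≤ (μ + k + 1) * Real.Gamma (μ + k + 1) := by gcongr; linarith
    rw [abs_mul, abs_of_pos (bA_pos hμ k), abs_pow]
    unfold bA
    rw [mul_zero, zero_add, div_pow]
    have hf : (0:ℝ) < (Nat.factorial k : ℝ) := by positivity
    calc 1 / (Real.Gamma (μ + k + 1) * (Nat.factorial k : ℝ)) * |y|^k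
        ≤ 1 / ((Real.Gamma (μ+1) * (μ+1)^k) * (Nat.factorial k : ℝ)) * |y|^k := by gcongr
      _ = _ := by field_simp
  refine Summable.of_norm_bounded ?_ hb
  simp only [mul_zero, zero_add]
  exact (Real.summable_pow_div_factorial _).mul_left _

lemma bG_pos {μ : ℝ} (hμ : -1 < μ) {y : ℝ} (hy : 0 ≤ y) : 0 < bG μ y := by
  unfold bG
  refine (bG_summable hμ y).tsum_pos (fun k => ?_) 0 ?_
  · have := bA_pos hμ k; positivity
  · simpa using bA_pos hμ 0

lemma bG_rec {μ : ℝ} (hμ : -1 < μ) (y : ℝ) :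
    bG μ y = (μ + 1) * bG (μ+1) y + y * bG (μ+1+1) y := by
  have s0 := bG_summable hμ y
  have s1 := bG_summable (μ := μ+1) (by linarith) y
  have s2 := bG_summable (μ := μ+1+1) (by linarith) y
  have e : ∀ k : ℕ, bA μ k * y^k - (μ+1) * (bA (μ+1) k * y^k) = k * (bA (μ+1) k * y^k) := by
    intro k
    rw [bA_shift hμ k]; ring
  have sb : Summable (fun k : ℕ => (k:ℝ) * (bA (μ+1) k * y^k)) := by
    simp_rw [← e]
    exact s0.sub (s1.mul_left _)
  have hb : ∑' k : ℕ, (k:ℝ) * (bA (μ+1) k * y^k) = y * bG (μ+1+1) y := by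
    rw [sb.tsum_eq_zero_add]
    simp only [Nat.cast_zero, zero_mul, zero_add]
    unfold bG
    rw [← tsum_mul_left]
    congr 1; ext k
    rw [← bA_succ (μ+1) k]; push_cast; ring
  rw [← hb]
  simp_rw [← e]
  rw [s0.tsum_sub (s1.mul_left _), tsum_mul_left]
  unfold bG; ring

lemma bG_hasDerivAt {μ : ℝ} (hμ : -1 < μ) (y : ℝ) : HasDerivAt (bG μ) (bG (μ+1) y) y := by
  set R := |y| + 1 with hR
  have hR0 : 0 < R := by positivity
  have hs : Summable (fun k : ℕ => (k:ℝ) * bA μ k * R^(k-1)) := by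
    rw [← summable_nat_add_iff 1]
    refine (bG_summable (μ := μ+1) (by linarith) R).congr (fun k => ?_)
    rw [← bA_succ]; simp
  have hd := hasDerivAt_tsum_of_isPreconnected (𝕜 := ℝ) (F := ℝ)
    (g := fun (k:ℕ) z => bA μ k * z^k) (g' := fun (k:ℕ) z => bA μ k * ((k:ℝ) * z^(k-1)))
    (t := Metric.ball (0:ℝ) R) (y₀ := 0) (y := y) hs Metric.isOpen_ball
    (convex_ball (0:ℝ) R).isPreconnected
    (fun k z _ => by exact (hasDerivAt_pow k z).const_mul _)
    (fun k z hz => by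
      have hz' : |z| ≤ R := by
        simpa using (Metric.mem_ball.1 hz).le
      rw [Real.norm_eq_abs, abs_mul, abs_mul, abs_pow, abs_of_pos (bA_pos hμ k), Nat.abs_cast]
      have := bA_pos hμ k
      calc bA μ k * ((k:ℝ) * |z|^(k-1)) ≤ bA μ k * ((k:ℝ) * R^(k-1)) := by gcongr
        _ = _ := by ring)
    (by simpa using hR0) (bG_summable hμ 0) (by simp [hR])
  have hs' : Summable (fun k : ℕ => bA μ k * ((k:ℝ) * y^(k-1))) := by
    rw [← summable_nat_add_iff 1]
    refine (bG_summable (μ := μ+1) (by linarith) y).congr (fun k => ?_)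
    rw [← bA_succ]; simp; ring
  have e : ∑' k : ℕ, bA μ k * ((k:ℝ) * y^(k-1)) = bG (μ+1) y := by
    rw [hs'.tsum_eq_zero_add]
    simp only [Nat.cast_zero, zero_mul, mul_zero, zero_add]
    unfold bG
    congr 1; ext k
    rw [← bA_succ]; push_cast; ring
  rw [← e]
  exact hd

lemma bG_continuous {μ : ℝ} (hμ : -1 < μ) : Continuous (bG μ) :=
  continuous_iff_continuousAt.2 fun y => (bG_hasDerivAt hμ y).continuousAt

/-- `q μ t = g_μ(t²/4)` -/
noncomputable def bQ (μ t : ℝ) : ℝ := bG μ (t^2/4)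

lemma bQ_pos {μ : ℝ} (hμ : -1 < μ) (t : ℝ) : 0 < bQ μ t := bG_pos hμ (by positivity)

lemma bQ_hasDerivAt {μ : ℝ} (hμ : -1 < μ) (t : ℝ) :
    HasDerivAt (bQ μ) (t / 2 * bQ (μ+1) t) t := by
  have h1 : HasDerivAt (fun t : ℝ => t^2/4) (t/2) t := by
    refine ((hasDerivAt_pow 2 t).div_const 4).congr_deriv ?_
    norm_num; ring
  exact ((bG_hasDerivAt hμ (t^2/4)).comp t h1).congr_deriv (by unfold bQ; ring)

lemma bQ_continuous {μ : ℝ} (hμ : -1 < μ) : Continuous (bQ μ) :=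
  continuous_iff_continuousAt.2 fun y => (bQ_hasDerivAt hμ y).continuousAt

lemma bQ_rec {μ : ℝ} (hμ : -1 < μ) (t : ℝ) :
    bQ μ t = (μ + 1) * bQ (μ+1) t + t^2/4 * bQ (μ+1+1) t := bG_rec hμ _

lemma besselI_eq (μ : ℝ) {t : ℝ} (ht : 0 < t) : besselI μ t = (t/2)^μ * bQ μ t := by
  unfold besselI bQ bG
  rw [← tsum_mul_left]
  congr 1; ext k
  have h : (0:ℝ) < t / 2 := by positivity
  rw [Real.rpow_add h, Real.rpow_mul h.le]
  have : ((t/2)^(2:ℝ))^(k:ℝ) = (t^2/4)^k := by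
    rw [Real.rpow_natCast, Real.rpow_two]; congr 1; ring
  rw [this]; unfold bA; ring

lemma powd (a : ℝ) {t : ℝ} (ht : 0 < t) :
    HasDerivAt (fun t : ℝ => t^(a+1)) ((a+1) * t^a) t := by
  have := Real.hasDerivAt_rpow_const (x := t) (p := a+1) (Or.inl ht.ne')
  simpa using this

lemma bQ_lt {μ : ℝ} (hμ : -(1/2) < μ) {t : ℝ} (ht : 0 < t) :
    t / 2 * bQ (μ+1) t < bQ μ t := by
  have h1 : -1 < μ := by linarith
  have h2 : -1 < μ + 1 := by linarith
  let ψ : ℝ → ℝ := fun t => Real.exp t * (t^(2*μ+1) * (bQ μ t - t/2 * bQ (μ+1) t))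
  have hd : ∀ s, 0 < s → HasDerivAt ψ (Real.exp s * ((2*μ+1) * s^(2*μ) * bQ μ s)) s := by
    intro s hs
    have := (Real.hasDerivAt_exp s).mul ((powd (2*μ) hs).mul ((bQ_hasDerivAt h1 s).sub
      (((hasDerivAt_id s).div_const 2).mul (bQ_hasDerivAt h2 s))))
    refine this.congr_deriv ?_
    have e : s^(2*μ+1) = s^(2*μ) * s := Real.rpow_add_one hs.ne' _
    simp only [id, Pi.mul_apply, Pi.sub_apply]
    rw [e, bQ_rec h1 s]; ring
  have hc : ContinuousOn ψ (Set.Ici 0) := by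
    have c1 := bQ_continuous h1
    have c2 := bQ_continuous h2
    have c3 : Continuous (fun t : ℝ => t^(2*μ+1)) := Real.continuous_rpow_const (by linarith)
    apply Continuous.continuousOn
    fun_prop
  have hm : StrictMonoOn ψ (Set.Ici 0) := by
    refine strictMonoOn_of_deriv_pos (convex_Ici 0) hc ?_
    intro s hs
    rw [interior_Ici] at hs
    have hs : 0 < s := hs
    rw [(hd s hs).deriv]
    have := bQ_pos h1 s
    have : 0 < 2*μ+1 := by linarith
    positivity
  have h := hm (Set.mem_Ici.2 le_rfl) (Set.mem_Ici.2 ht.le) ht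
  have h0 : ψ 0 = 0 := by
    simp only [ψ]
    rw [Real.zero_rpow (by linarith)]; ring
  rw [h0] at h
  have := Real.exp_pos t
  have := Real.rpow_pos_of_pos ht (2*μ+1)
  have h' := pos_of_mul_pos_right (pos_of_mul_pos_right h (Real.exp_pos t).le) this.le
  linarith

theorem stmt_0 (γ x₀ ν : ℝ) (hγ0 : 0 < γ) (hγ1 : γ < 1) (hx₀ : 1 / (1 - γ) < x₀)
    (hν : -(1/2) < ν) (x : ℝ) (hx : x₀ ≤ x) :
    ∫ t in (0 : ℝ)..x, Real.exp (-γ * t) * t ^ ν * besselI ν t <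
      max (2 * (ν + 1 + x₀) / (2 * ν + 1)) (x₀ / ((1 - γ) * x₀ - 1)) *
        (Real.exp (-γ * x) * x ^ ν * besselI (ν + 1) x) := by
  have h1 : -1 < ν := by linarith
  have h2 : -1 < ν + 1 := by linarith
  have hn : 0 < 2 * ν + 1 := by linarith
  have hg : 0 < 1 - γ := by linarith
  have hx0 : 0 < x₀ := lt_trans (by positivity) hx₀
  have hxp : 0 < x := by linarith
  have hden : 0 < (1 - γ) * x₀ - 1 := by
    rw [div_lt_iff₀ hg] at hx₀; linarith
  set M := max (2 * (ν + 1 + x₀) / (2 * ν + 1)) (x₀ / ((1 - γ) * x₀ - 1)) with hM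
  set c : ℝ := (1/2)^ν with hc
  have hcp : 0 < c := by positivity
  have c1 := bQ_continuous h1
  have c2 := bQ_continuous h2
  have c3 : Continuous (fun t : ℝ => t^(2*ν+1)) := Real.continuous_rpow_const (by linarith)
  let f : ℝ → ℝ := fun t => t^(2*ν) * (c * Real.exp (-γ*t) * bQ ν t)
  let G : ℝ → ℝ := fun t => Real.exp (-γ*t) * (t^(2*ν+1) * (c/2 * bQ (ν+1) t))
  let Φ : ℝ → ℝ := fun t => Real.exp (-γ*t) * (t^(2*ν+1) *
    (c / (2*ν+1) * (bQ ν t + t/2 * bQ (ν+1) t)))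
  have hf : ∀ t, 0 < t → Real.exp (-γ * t) * t ^ ν * besselI ν t = f t := by
    intro t ht
    simp only [f]
    rw [besselI_eq ν ht, div_eq_mul_one_div t 2, Real.mul_rpow ht.le (by norm_num), two_mul,
      Real.rpow_add ht]
    ring
  have hG : Real.exp (-γ * x) * x ^ ν * besselI (ν + 1) x = G x := by
    simp only [G]
    rw [besselI_eq _ hxp, div_eq_mul_one_div x 2, Real.mul_rpow hxp.le (by norm_num),
      Real.rpow_add_one (by norm_num : (1/2:ℝ) ≠ 0) ν, Real.rpow_add_one hxp.ne' ν,
      Real.rpow_add_one hxp.ne' (2*ν), two_mul, Real.rpow_add hxp]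
    ring
  have hfi : ∀ a b : ℝ, IntervalIntegrable f volume a b := by
    intro a b
    refine (intervalIntegral.intervalIntegrable_rpow' (by linarith)).mul_continuousOn ?_
    apply Continuous.continuousOn
    fun_prop
  have hI : ∫ t in (0 : ℝ)..x, Real.exp (-γ * t) * t ^ ν * besselI ν t = ∫ t in (0:ℝ)..x, f t := by
    refine intervalIntegral.integral_congr_ae (Filter.Eventually.of_forall fun t ht => ?_)
    rw [Set.uIoc_of_le hxp.le] at ht
    exact hf t ht.1
  have he : ∀ t : ℝ, HasDerivAt (fun t : ℝ => Real.exp (-γ*t)) (Real.exp (-γ*t) * (-γ)) t := by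
    intro t
    have := ((hasDerivAt_id t).const_mul (-γ)).exp
    simpa using this
  have hΦd : ∀ t, 0 < t → HasDerivAt Φ (f t + (1-γ) * Φ t) t := by
    intro t ht
    have := (he t).mul ((powd (2*ν) ht).mul (((bQ_hasDerivAt h1 t).add
      (((hasDerivAt_id t).div_const 2).mul (bQ_hasDerivAt h2 t))).const_mul (c/(2*ν+1))))
    refine this.congr_deriv ?_
    have e : t^(2*ν+1) = t^(2*ν) * t := Real.rpow_add_one ht.ne' _
    have r := bQ_rec h1 t
    simp only [id, Pi.mul_apply, Pi.add_apply, Φ, f]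
    rw [e, r]
    field_simp
    ring
  have hGd : ∀ t, 0 < t → HasDerivAt G
      (Real.exp (-γ*t) * (c * t^(2*ν)) * (bQ ν t - (γ + 1/t) * (t/2 * bQ (ν+1) t))) t := by
    intro t ht
    have := (he t).mul ((powd (2*ν) ht).mul ((bQ_hasDerivAt h2 t).const_mul (c/2)))
    refine this.congr_deriv ?_
    have e : t^(2*ν+1) = t^(2*ν) * t := Real.rpow_add_one ht.ne' _
    have r := bQ_rec h1 t
    simp only [Pi.mul_apply]
    rw [e, r]
    field_simp
    ring
  have hΦ0 : Φ 0 = 0 := by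
    simp only [Φ]; rw [Real.zero_rpow hn.ne']; ring
  have hGpos : ∀ t, 0 < t → 0 < G t := by
    intro t ht
    have := bQ_pos h2 t
    simp only [G]; positivity
  have hMpos : 0 < M := lt_of_lt_of_le (by positivity) (le_max_right _ _)
  -- first part
  have p1 : ∫ t in (0:ℝ)..x₀, f t ≤ Φ x₀ - Φ 0 := by
    refine intervalIntegral.integral_le_sub_of_hasDeriv_right_of_le hx0.le ?_
      (fun t ht => (hΦd t ht.1).hasDerivWithinAt) ?_ ?_
    · apply Continuous.continuousOn
      fun_prop
    · exact (intervalIntegrable_iff_integrableOn_Icc_of_le hx0.le).1 (hfi _ _)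
    · intro t ht
      have ht0 : 0 < t := ht.1
      have := bQ_pos h1 t
      have := bQ_pos h2 t
      have : 0 < Φ t := by simp only [Φ]; positivity
      nlinarith
  have p2 : Φ x₀ < M * G x₀ := by
    have hlt := bQ_lt (μ := ν+1) (by linarith) hx0
    have r := bQ_rec h1 x₀
    have k : Φ x₀ < (2 * (ν + 1 + x₀) / (2 * ν + 1)) * G x₀ := by
      have : (2 * (ν + 1 + x₀) / (2 * ν + 1)) * G x₀ - Φ x₀ = 
        Real.exp (-γ*x₀) * x₀^(2*ν+1) * (c / (2*ν+1)) * (x₀ / 2) *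
          (bQ (ν+1) x₀ - x₀/2 * bQ (ν+1+1) x₀) := by
        simp only [G, Φ]
        rw [r]
        field_simp
        ring
      have : 0 < (2 * (ν + 1 + x₀) / (2 * ν + 1)) * G x₀ - Φ x₀ := by
        rw [this]
        have : 0 < bQ (ν+1) x₀ - x₀/2 * bQ (ν+1+1) x₀ := by linarith
        positivity
      linarith
    exact k.trans_le (mul_le_mul_of_nonneg_right (le_max_left _ _) (hGpos _ hx0).le)
  have p3 : ∫ t in x₀..x, f t ≤ M * G x - M * G x₀ := by
    refine intervalIntegral.integral_le_sub_of_hasDeriv_right_of_le (g := fun t => M * G t) hx ?_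
      (fun t ht => ((hGd t (hx0.trans ht.1)).const_mul M).hasDerivWithinAt) ?_ ?_
    · apply Continuous.continuousOn
      fun_prop
    · exact (intervalIntegrable_iff_integrableOn_Icc_of_le hx).1 (hfi _ _)
    · intro t ht
      have ht0 : 0 < t := hx0.trans ht.1
      have q1 := bQ_pos h1 t
      have q2 := bQ_lt hν ht0
      have ht1 : 1 / t ≤ 1 / x₀ := one_div_le_one_div_of_le hx0 ht.1.le
      have a1 : (γ + 1/t) * (t/2 * bQ (ν+1) t) ≤ (γ + 1/x₀) * bQ ν t := by
        have := bQ_pos h2 t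
        gcongr
      have a2 : x₀ / ((1 - γ) * x₀ - 1) ≤ M := le_max_right _ _
      have a3 : 1 ≤ M * (1 - γ - 1/x₀) := by
        rw [div_le_iff₀ hden] at a2
        have : M * (1 - γ - 1/x₀) = M * ((1 - γ) * x₀ - 1) / x₀ := by field_simp
        rw [this, le_div_iff₀ hx0]; linarith
      have a4 : bQ ν t ≤ M * (bQ ν t - (γ + 1/t) * (t/2 * bQ (ν+1) t)) := by
        calc bQ ν t ≤ (M * (1 - γ - 1/x₀)) * bQ ν t := by nlinarith
          _ = M * (bQ ν t - (γ + 1/x₀) * bQ ν t) := by ring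
          _ ≤ _ := by gcongr
      have a5 : 0 ≤ Real.exp (-γ*t) * (c * t^(2*ν)) := by positivity
      have := mul_le_mul_of_nonneg_left a4 a5
      simp only [f]
      linarith
  rw [hI, hG, ← intervalIntegral.integral_add_adjacent_intervals (hfi 0 x₀) (hfi x₀ x)]
  linarith
end

section
/- Let ν ≥ −1/2. Then for all x > 0, x · K_{ν+2}(x) · I_ν(x) > 1/2. -/
open Real MeasureTheory

/-! ### The entire function attached to `I` -/

noncomputable def FF (s z : ℝ) : ℝ := ∑' k : ℕ, z ^ k / (Real.Gamma (s + k) * (Nat.factorial k : ℝ))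

lemma gamma_lb (s : ℝ) (hs : 0 < s) : ∃ c : ℝ, 0 < c ∧ ∀ k : ℕ, c ≤ Real.Gamma (s + k) := by
  refine ⟨min (Real.Gamma s) (Real.Gamma (s + 1)),
    lt_min (Real.Gamma_pos_of_pos hs) (Real.Gamma_pos_of_pos (by linarith)), ?_⟩
  intro k
  rcases k with _ | k
  · simp
  · induction k with
    | zero => simp
    | succ k ih =>
      refine ih.trans ?_
      have h : Real.Gamma (s + ((k + 1 + 1 : ℕ) : ℝ)) = (s + ((k + 1 : ℕ) : ℝ)) * Real.Gamma (s + ((k + 1 : ℕ) : ℝ)) := by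
        rw [← Real.Gamma_add_one (by positivity)]
        push_cast; ring_nf
      rw [h]
      have : 0 < Real.Gamma (s + ((k + 1 : ℕ) : ℝ)) := Real.Gamma_pos_of_pos (by positivity)
      have h2 : (1 : ℝ) ≤ s + ((k + 1 : ℕ) : ℝ) := by
        push_cast
        have : (0 : ℝ) ≤ k := by positivity
        linarith
      nlinarith

lemma FF_summable (s z : ℝ) (hs : 0 < s) :
    Summable (fun k : ℕ => z ^ k / (Real.Gamma (s + k) * (Nat.factorial k : ℝ))) := by
  obtain ⟨c, hc, h⟩ := gamma_lb s hs
  refine Summable.of_norm_bounded ((Real.summable_pow_div_factorial |z|).mul_left c⁻¹) ?_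
  intro k
  have hk := h k
  have hf : (0 : ℝ) < Nat.factorial k := by positivity
  rw [Real.norm_eq_abs, abs_div, abs_pow, abs_of_pos (by positivity : 0 < Real.Gamma (s + k) * (Nat.factorial k : ℝ))]
  calc |z| ^ k / (Real.Gamma (s + k) * (Nat.factorial k : ℝ)) ≤ |z| ^ k / (c * (Nat.factorial k : ℝ)) := by gcongr
    _ = _ := by field_simp

lemma FF_pos (s z : ℝ) (hs : 0 < s) (hz : 0 ≤ z) : 1 / Real.Gamma s ≤ FF s z := by
  have := (FF_summable s z hs).le_tsum 0 (fun k _ => by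
    have : 0 < Real.Gamma (s + k) := Real.Gamma_pos_of_pos (by positivity)
    positivity)
  simpa [FF] using this

lemma shift_term (s z : ℝ) (k : ℕ) :
    ((k + 1 : ℕ) : ℝ) * z ^ k / (Real.Gamma (s + ((k + 1 : ℕ) : ℝ)) * (Nat.factorial (k + 1) : ℝ))
      = z ^ k / (Real.Gamma (s + 1 + k) * (Nat.factorial k : ℝ)) := by
  have e : s + ((k + 1 : ℕ) : ℝ) = s + 1 + k := by push_cast; ring
  rw [e, Nat.factorial_succ]
  push_cast
  have hk : (k : ℝ) + 1 ≠ 0 := by positivity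
  have hf : (Nat.factorial k : ℝ) ≠ 0 := by positivity
  rw [show Real.Gamma (s + 1 + k) * (((k : ℝ) + 1) * (Nat.factorial k : ℝ)) = ((k : ℝ) + 1) * (Real.Gamma (s + 1 + k) * (Nat.factorial k : ℝ)) by ring]
  rw [mul_div_mul_left _ _ hk]

lemma FF_deriv (s z : ℝ) (hs : 0 < s) : HasDerivAt (FF s) (FF (s + 1) z) z := by
  set R : ℝ := |z| + 1
  have hR : 0 < R := by positivity
  have key := hasDerivAt_tsum_of_isPreconnected
    (g := fun (k : ℕ) (y : ℝ) => y ^ k / (Real.Gamma (s + k) * (Nat.factorial k : ℝ)))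
    (g' := fun (k : ℕ) (y : ℝ) => (k : ℝ) * y ^ (k - 1) / (Real.Gamma (s + k) * (Nat.factorial k : ℝ)))
    (u := fun (k : ℕ) => (k : ℝ) * R ^ (k - 1) / (Real.Gamma (s + k) * (Nat.factorial k : ℝ)))
    (t := Set.Ioo (-R) R) (y₀ := z) (y := z) ?_ isOpen_Ioo isPreconnected_Ioo ?_ ?_ ?_ ?_ ?_
  · have hsum : (∑' k : ℕ, (k : ℝ) * z ^ (k - 1) / (Real.Gamma (s + k) * (Nat.factorial k : ℝ))) = FF (s + 1) z := by
      rw [tsum_eq_zero_add']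
      · simp only [FF, Nat.add_sub_cancel]
        simp only [shift_term]
        simp
      · simp only [Nat.add_sub_cancel]
        simp only [shift_term]
        exact FF_summable (s + 1) z (by linarith)
    rw [hsum] at key
    exact key
  · rw [← summable_nat_add_iff 1]
    simp only [Nat.add_sub_cancel]
    simp only [shift_term]
    exact FF_summable (s + 1) R (by linarith)
  · intro k y _
    exact (hasDerivAt_pow k y).div_const _
  · intro k y hy
    have : 0 < Real.Gamma (s + k) := Real.Gamma_pos_of_pos (by positivity)
    have hy' : |y| ≤ R := (abs_lt.mpr hy).le
    rw [Real.norm_eq_abs, abs_div, abs_mul, abs_pow, abs_of_pos (by positivity : 0 < Real.Gamma (s + k) * (Nat.factorial k : ℝ)), Nat.abs_cast]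
    gcongr
  · exact abs_lt.mp (by simp [R])
  · exact FF_summable s z hs
  · exact abs_lt.mp (by simp [R])

lemma FF_rec (s z : ℝ) (hs : 0 < s) : FF s z = s * FF (s + 1) z + z * FF (s + 1 + 1) z := by
  have h1 := (FF_summable (s + 1) z (by linarith)).mul_left s
  have h2 := (FF_summable (s + 1 + 1) z (by linarith)).mul_left z
  have hsh : ∀ k : ℕ, ((k + 1 : ℕ) : ℝ) * z ^ (k + 1) / (Real.Gamma (s + 1 + ((k + 1 : ℕ) : ℝ)) * (Nat.factorial (k + 1) : ℝ))
      = z * (z ^ k / (Real.Gamma (s + 1 + 1 + k) * (Nat.factorial k : ℝ))) := by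
    intro k
    rw [← shift_term]; ring
  have h3 : Summable (fun k : ℕ => (k : ℝ) * z ^ k / (Real.Gamma (s + 1 + k) * (Nat.factorial k : ℝ))) := by
    rw [← summable_nat_add_iff 1]
    simp only [hsh]
    exact h2
  have h4 : (∑' k : ℕ, (k : ℝ) * z ^ k / (Real.Gamma (s + 1 + k) * (Nat.factorial k : ℝ))) = z * FF (s + 1 + 1) z := by
    rw [h3.tsum_eq_zero_add]
    simp only [hsh]
    simp [FF, tsum_mul_left]
  rw [← h4]
  simp only [FF]
  rw [← tsum_mul_left, ← h1.tsum_add h3]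
  refine tsum_congr fun k => ?_
  have hg : Real.Gamma (s + 1 + k) = (s + k) * Real.Gamma (s + k) := by
    rw [← Real.Gamma_add_one (by positivity)]; ring_nf
  have : 0 < Real.Gamma (s + k) := Real.Gamma_pos_of_pos (by positivity)
  have hp : 0 < s + k := by positivity
  rw [hg]
  field_simp

/-- `a(x) > b(x)`. -/
lemma a_gt_b (s : ℝ) (hs : 1 / 2 ≤ s) (x : ℝ) (hx : 0 < x) :
    (x / 2) * FF (s + 1) (x ^ 2 / 4) < FF s (x ^ 2 / 4) := by
  have hs0 : 0 < s := by linarith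
  have hd : ∀ y : ℝ, HasDerivAt (fun y : ℝ => Real.exp y * (FF s (y ^ 2 / 4) - (y / 2) * FF (s + 1) (y ^ 2 / 4)))
      (Real.exp y * ((s - 1 / 2) * FF (s + 1) (y ^ 2 / 4))) y := by
    intro y
    have hq : HasDerivAt (fun y : ℝ => y ^ 2 / 4) (y / 2) y := by
      convert! (hasDerivAt_pow 2 y).div_const 4 using 1
      simp; ring
    have h1 := (FF_deriv s (y ^ 2 / 4) hs0).comp y hq
    have h2 := (FF_deriv (s + 1) (y ^ 2 / 4) (by linarith)).comp y hq
    have h3 := (Real.hasDerivAt_exp y).mul (h1.sub (((hasDerivAt_id y).div_const 2).mul h2))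
    convert! h3 using 1
    have := FF_rec s (y ^ 2 / 4) hs0
    simp only [Function.comp, id, Pi.sub_apply, Pi.mul_apply]
    rw [this]
    ring
  have hm : MonotoneOn (fun y : ℝ => Real.exp y * (FF s (y ^ 2 / 4) - (y / 2) * FF (s + 1) (y ^ 2 / 4))) Set.univ := by
    refine monotoneOn_of_deriv_nonneg convex_univ (fun y _ => (hd y).continuousAt.continuousWithinAt)
      (fun y _ => (hd y).differentiableAt.differentiableWithinAt) ?_
    intro y _
    rw [(hd y).deriv]
    have h1 := FF_pos (s + 1) (y ^ 2 / 4) (by linarith) (by positivity)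
    have h2 : 0 < Real.Gamma (s + 1) := Real.Gamma_pos_of_pos (by linarith)
    have h3 : 0 < 1 / Real.Gamma (s + 1) := by positivity
    have : 0 ≤ s - 1 / 2 := by linarith
    have h4 : 0 ≤ FF (s + 1) (y ^ 2 / 4) := by linarith
    positivity
  have h0 := hm (Set.mem_univ 0) (Set.mem_univ x) hx.le
  simp only [Real.exp_zero] at h0
  norm_num at h0
  have h1 := FF_pos s 0 hs0 le_rfl
  have h2 : 0 < Real.Gamma s := Real.Gamma_pos_of_pos hs0
  have h3 : 0 < 1 / Real.Gamma s := by positivity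
  have h5 : 0 < Real.exp x * (FF s (x ^ 2 / 4) - x / 2 * FF (s + 1) (x ^ 2 / 4)) := by linarith
  have := (mul_pos_iff_of_pos_left (Real.exp_pos x)).mp h5
  linarith

lemma besselI_eq_s8 (ν x : ℝ) (hx : 0 < x) : besselI ν x = (x / 2) ^ ν * FF (ν + 1) (x ^ 2 / 4) := by
  unfold besselI FF
  rw [← tsum_mul_left]
  refine tsum_congr fun k => ?_
  have h : (x / 2) ^ (ν + 2 * (k : ℝ)) = (x / 2) ^ ν * (x ^ 2 / 4) ^ k := by
    rw [Real.rpow_add (by positivity)]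
    congr 1
    rw [show (2 * (k : ℝ)) = ((2 * k : ℕ) : ℝ) by push_cast; ring, Real.rpow_natCast, pow_mul]
    congr 1; ring
  rw [h, show ν + (k : ℝ) + 1 = ν + 1 + k by ring]
  ring

/-! ### The function `K` -/

lemma kcosh_le (μ t : ℝ) (ht : 0 < t) : Real.cosh (μ * t) ≤ Real.exp (|μ| * t) := by
  rw [← Real.cosh_abs, abs_mul, abs_of_pos ht, Real.cosh_eq]
  have : Real.exp (-(|μ| * t)) ≤ Real.exp (|μ| * t) := Real.exp_le_exp.mpr (by
    have : 0 ≤ |μ| * t := by positivity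
    linarith)
  linarith

lemma kabs_sinh_le (y : ℝ) : |Real.sinh y| ≤ Real.cosh y := by
  rw [Real.sinh_eq, Real.cosh_eq, abs_le]
  constructor <;> linarith [Real.exp_pos y, Real.exp_pos (-y)]

lemma kcosh_ge (t : ℝ) (ht : 0 < t) : t ^ 2 / 4 ≤ Real.cosh t := by
  rw [Real.cosh_eq]
  have := Real.quadratic_le_exp_of_nonneg ht.le
  linarith [Real.exp_pos (-t)]

lemma kint (x : ℝ) (hx : 0 < x) (g : ℝ → ℝ) (hg : Continuous g) (c : ℝ)
    (h : ∀ t, 0 < t → |g t| ≤ Real.exp (c * t)) :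
    IntegrableOn (fun t => Real.exp (-x * Real.cosh t) * g t) (Set.Ioi 0) := by
  have h1 : Integrable (fun t : ℝ => Real.exp (2 * c ^ 2 / x) * Real.exp (-(x / 8) * t ^ 2)) :=
    (integrable_exp_neg_mul_sq (by positivity)).const_mul _
  refine Integrable.mono' h1.integrableOn ?_ ?_
  · have : Continuous (fun t => Real.exp (-x * Real.cosh t) * g t) := by
      have := Real.continuous_cosh
      fun_prop
    exact this.aestronglyMeasurable
  · refine (ae_restrict_iff' measurableSet_Ioi).mpr (Filter.Eventually.of_forall ?_)
    intro t ht
    have ht : 0 < t := ht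
    rw [Real.norm_eq_abs, abs_mul, abs_of_pos (Real.exp_pos _), ← Real.exp_add]
    calc Real.exp (-x * Real.cosh t) * |g t| ≤ Real.exp (-x * Real.cosh t) * Real.exp (c * t) := by
          gcongr; exact h t ht
      _ = Real.exp (-x * Real.cosh t + c * t) := by rw [Real.exp_add]
      _ ≤ _ := by
        apply Real.exp_le_exp.mpr
        have h3 := kcosh_ge t ht
        have h4 : x * (t ^ 2 / 4) ≤ x * Real.cosh t := by gcongr
        have h5 : c * t ≤ 2 * c ^ 2 / x + x / 8 * t ^ 2 := by
          have : 2 * c ^ 2 / x + x / 8 * t ^ 2 - c * t = (4 * c - x * t) ^ 2 / (8 * x) := by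
            field_simp; ring
          have : 0 ≤ (4 * c - x * t) ^ 2 / (8 * x) := by positivity
          linarith
        nlinarith

lemma kint_cosh (μ x : ℝ) (hx : 0 < x) :
    IntegrableOn (fun t => Real.exp (-x * Real.cosh t) * Real.cosh (μ * t)) (Set.Ioi 0) := by
  refine kint x hx _ (by fun_prop) |μ| ?_
  intro t ht
  rw [abs_of_pos (Real.cosh_pos _)]
  exact kcosh_le μ t ht

lemma kint_sinh (μ x : ℝ) (hx : 0 < x) :
    IntegrableOn (fun t => Real.exp (-x * Real.cosh t) * Real.sinh (μ * t)) (Set.Ioi 0) := by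
  refine kint x hx _ (by fun_prop) |μ| ?_
  intro t ht
  exact (kabs_sinh_le _).trans (kcosh_le μ t ht)

lemma kint_sinhsinh (μ x : ℝ) (hx : 0 < x) :
    IntegrableOn (fun t => Real.exp (-x * Real.cosh t) * (Real.sinh t * Real.sinh (μ * t))) (Set.Ioi 0) := by
  refine kint x hx _ (by fun_prop) (1 + |μ|) ?_
  intro t ht
  rw [abs_mul, add_mul, Real.exp_add]
  have h1 := (kabs_sinh_le _).trans (kcosh_le μ t ht)
  have h2 := (kabs_sinh_le _).trans (kcosh_le 1 t ht)
  rw [abs_one, one_mul] at h2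
  rw [one_mul]
  gcongr

lemma kint_coshcosh (μ x : ℝ) (hx : 0 < x) :
    IntegrableOn (fun t => Real.exp (-x * Real.cosh t) * (Real.cosh t * Real.cosh (μ * t))) (Set.Ioi 0) := by
  refine kint x hx _ (by fun_prop) (1 + |μ|) ?_
  intro t ht
  rw [abs_mul, add_mul, Real.exp_add, abs_of_pos (Real.cosh_pos _), abs_of_pos (Real.cosh_pos _)]
  have h1 := (kcosh_le μ t ht)
  have h2 := (kcosh_le 1 t ht)
  rw [abs_one, one_mul] at h2
  rw [one_mul]
  have := Real.cosh_pos (μ * t)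
  gcongr

lemma besselK_ibp (μ x : ℝ) (hx : 0 < x) :
    μ * besselK μ x = x * ∫ t in Set.Ioi (0 : ℝ), Real.exp (-x * Real.cosh t) * (Real.sinh t * Real.sinh (μ * t)) := by
  have hd : ∀ t : ℝ, HasDerivAt (fun t => Real.exp (-x * Real.cosh t) * Real.sinh (μ * t))
      (μ * (Real.exp (-x * Real.cosh t) * Real.cosh (μ * t)) -
        x * (Real.exp (-x * Real.cosh t) * (Real.sinh t * Real.sinh (μ * t)))) t := by
    intro t
    have h1 := ((Real.hasDerivAt_cosh t).const_mul (-x)).exp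
    have h2 := ((hasDerivAt_id t).const_mul μ).sinh
    convert! h1.mul h2 using 1
    simp; ring
  have i1 := (kint_cosh μ x hx).const_mul μ
  have i2 := (kint_sinhsinh μ x hx).const_mul x
  have hlim := tendsto_zero_of_hasDerivAt_of_integrableOn_Ioi (a := 0) (fun t _ => hd t) (i1.sub i2) (kint_sinh μ x hx)
  have := integral_Ioi_of_hasDerivAt_of_tendsto' (a := 0) (fun t _ => hd t) (i1.sub i2) hlim
  rw [integral_sub i1 i2, integral_const_mul, integral_const_mul] at this
  simp at this
  unfold besselK
  simp only [neg_mul]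
  linarith

lemma besselK_deriv (μ x : ℝ) (hx : 0 < x) :
    HasDerivAt (besselK μ) (-∫ t in Set.Ioi (0 : ℝ), Real.exp (-x * Real.cosh t) * (Real.cosh t * Real.cosh (μ * t))) x := by
  have key := hasDerivAt_integral_of_dominated_loc_of_deriv_le (μ := volume.restrict (Set.Ioi (0 : ℝ)))
    (s := Set.Ioi (x / 2)) (x₀ := x) (F := fun x t => Real.exp (-x * Real.cosh t) * Real.cosh (μ * t))
    (F' := fun x t => -(Real.exp (-x * Real.cosh t) * (Real.cosh t * Real.cosh (μ * t))))
    (bound := fun t => Real.exp (-(x / 2) * Real.cosh t) * (Real.cosh t * Real.cosh (μ * t)))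
    (Ioi_mem_nhds (by linarith)) ?_ (kint_cosh μ x hx) (kint_coshcosh μ x hx).neg.aestronglyMeasurable ?_
    (kint_coshcosh μ (x / 2) (by positivity)) ?_
  · have := key.2
    rw [integral_neg] at this
    exact this
  · refine Filter.Eventually.of_forall fun y => ?_
    have : Continuous (fun t => Real.exp (-y * Real.cosh t) * Real.cosh (μ * t)) := by fun_prop
    exact this.aestronglyMeasurable
  · refine Filter.Eventually.of_forall fun t y hy => ?_
    have hy : x / 2 < y := hy
    have h1 := Real.cosh_pos t
    have h2 := Real.cosh_pos (μ * t)
    rw [norm_neg, Real.norm_eq_abs, abs_of_pos (by positivity)]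
    gcongr
  · refine Filter.Eventually.of_forall fun t y hy => ?_
    have h1 := (((hasDerivAt_id y).neg).mul_const (Real.cosh t)).exp.mul_const (Real.cosh (μ * t))
    convert! h1 using 1
    simp; ring

lemma besselK_deriv_up (μ x : ℝ) (hx : 0 < x) :
    HasDerivAt (besselK μ) (μ / x * besselK μ x - besselK (μ + 1) x) x := by
  convert! besselK_deriv μ x hx using 1
  have h := besselK_ibp μ x hx
  have h2 : besselK (μ + 1) x = (∫ t in Set.Ioi (0 : ℝ), Real.exp (-x * Real.cosh t) * (Real.cosh t * Real.cosh (μ * t)))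
      + ∫ t in Set.Ioi (0 : ℝ), Real.exp (-x * Real.cosh t) * (Real.sinh t * Real.sinh (μ * t)) := by
    rw [← integral_add (kint_coshcosh μ x hx) (kint_sinhsinh μ x hx)]
    unfold besselK
    congr 1
    ext t
    rw [show (μ + 1) * t = t + μ * t by ring, Real.cosh_add]
    ring
  rw [h2, div_mul_eq_mul_div, h]
  field_simp
  ring

lemma besselK_deriv_down (μ x : ℝ) (hx : 0 < x) :
    HasDerivAt (besselK (μ + 1)) (-((μ + 1) / x * besselK (μ + 1) x) - besselK μ x) x := by
  convert! besselK_deriv (μ + 1) x hx using 1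
  have h := besselK_ibp (μ + 1) x hx
  have h2 : besselK μ x = (∫ t in Set.Ioi (0 : ℝ), Real.exp (-x * Real.cosh t) * (Real.cosh t * Real.cosh ((μ + 1) * t)))
      - ∫ t in Set.Ioi (0 : ℝ), Real.exp (-x * Real.cosh t) * (Real.sinh t * Real.sinh ((μ + 1) * t)) := by
    rw [← integral_sub (kint_coshcosh (μ + 1) x hx) (kint_sinhsinh (μ + 1) x hx)]
    unfold besselK
    congr 1
    ext t
    rw [show μ * t = (μ + 1) * t - t by ring, Real.cosh_sub]
    ring
  rw [h2, div_mul_eq_mul_div, h]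
  field_simp
  ring

lemma besselK_nonneg (μ x : ℝ) : 0 ≤ besselK μ x := by
  unfold besselK
  refine integral_nonneg fun t => ?_
  have := Real.cosh_pos (μ * t)
  positivity

lemma besselK_mono (μ κ x : ℝ) (hx : 0 < x) (h : |μ| ≤ |κ|) : besselK μ x ≤ besselK κ x := by
  unfold besselK
  refine integral_mono (kint_cosh μ x hx) (kint_cosh κ x hx) fun t => ?_
  have : Real.cosh (μ * t) ≤ Real.cosh (κ * t) := by
    rw [Real.cosh_le_cosh, abs_mul, abs_mul]
    gcongr
  show Real.exp (-x * Real.cosh t) * Real.cosh (μ * t) ≤ Real.exp (-x * Real.cosh t) * Real.cosh (κ * t)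
  gcongr

lemma besselK_lower (s x : ℝ) (hs : 0 < s) (hx : 0 < x) :
    2 ^ (s - 1) * Real.exp (-(x / 2)) * (∫ u in Set.Ioi (x / 2), Real.exp (-u) * u ^ (s - 1)) ≤ x ^ s * besselK s x := by
  have hx2 : 0 < x / 2 := by positivity
  have hcv := Real.GammaIntegral_convergent hs
  have hpt : ∀ t : ℝ, 0 ≤ t → Real.exp (-(x / 2 * Real.exp t)) * (x / 2 * Real.exp t) ^ (s - 1) * (x / 2 * Real.exp t)
      = (x / 2) ^ s * (Real.exp (-(x / 2 * Real.exp t)) * Real.exp (s * t)) := by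
    intro t _
    have hp : 0 < x / 2 * Real.exp t := by positivity
    rw [mul_assoc, ← Real.rpow_add_one hp.ne', sub_add_cancel, Real.mul_rpow hx2.le (Real.exp_pos t).le, ← Real.exp_mul, mul_comm t s]
    ring
  have hle : ∀ t : ℝ, 0 ≤ t → Real.exp (-(x / 2)) * (Real.exp (-(x / 2 * Real.exp t)) * Real.exp (s * t)) ≤
      2 * (Real.exp (-x * Real.cosh t) * Real.cosh (s * t)) := by
    intro t ht
    have h1 : Real.exp (s * t) ≤ 2 * Real.cosh (s * t) := by
      rw [Real.cosh_eq]; linarith [Real.exp_pos (-(s * t))]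
    have h2 : Real.exp (-(x / 2)) * Real.exp (-(x / 2 * Real.exp t)) ≤ Real.exp (-x * Real.cosh t) := by
      rw [← Real.exp_add]
      apply Real.exp_le_exp.mpr
      rw [Real.cosh_eq]
      have : Real.exp (-t) ≤ 1 := Real.exp_le_one_iff.mpr (by linarith)
      nlinarith
    calc _ = (Real.exp (-(x / 2)) * Real.exp (-(x / 2 * Real.exp t))) * Real.exp (s * t) := by ring
      _ ≤ Real.exp (-x * Real.cosh t) * (2 * Real.cosh (s * t)) := by gcongr
      _ = _ := by ring
  have hint : IntegrableOn (fun t => Real.exp (-(x / 2 * Real.exp t)) * Real.exp (s * t)) (Set.Ioi 0) := by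
    refine Integrable.mono' ((kint_cosh s x hx).const_mul (2 * Real.exp (x / 2))) ?_ ?_
    · have : Continuous (fun t => Real.exp (-(x / 2 * Real.exp t)) * Real.exp (s * t)) := by fun_prop
      exact this.aestronglyMeasurable
    · refine (ae_restrict_iff' measurableSet_Ioi).mpr (Filter.Eventually.of_forall ?_)
      intro t ht
      have ht : 0 < t := ht
      rw [Real.norm_eq_abs, abs_of_pos (by positivity)]
      have h1 := mul_le_mul_of_nonneg_left (hle t ht.le) (Real.exp_pos (x / 2)).le
      rw [← mul_assoc, ← Real.exp_add, add_neg_cancel, Real.exp_zero, one_mul] at h1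
      linarith
  have sub := integral_comp_mul_deriv_Ioi (a := 0) (f := fun t => x / 2 * Real.exp t)
    (f' := fun t => x / 2 * Real.exp t) (g := fun u => Real.exp (-u) * u ^ (s - 1))
    (by fun_prop) (Real.tendsto_exp_atTop.const_mul_atTop hx2)
    (fun t _ => ((Real.hasDerivAt_exp t).const_mul _).hasDerivWithinAt) ?_ ?_ ?_
  · simp only [Real.exp_zero, mul_one, Function.comp] at sub
    rw [← sub]
    rw [setIntegral_congr_fun measurableSet_Ioi (fun t (ht : 0 < t) => hpt t ht.le), integral_const_mul]
    have h1 : Real.exp (-(x / 2)) * ∫ t in Set.Ioi (0 : ℝ), Real.exp (-(x / 2 * Real.exp t)) * Real.exp (s * t) ≤ 2 * besselK s x := by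
      unfold besselK
      rw [← integral_const_mul, ← integral_const_mul]
      exact setIntegral_mono_on (hint.const_mul _) ((kint_cosh s x hx).const_mul 2) measurableSet_Ioi
        (fun t ht => hle t (le_of_lt ht))
    have h2 : x ^ s = 2 * (2 ^ (s - 1) * (x / 2) ^ s) := by
      rw [Real.rpow_sub_one (by norm_num), Real.div_rpow hx.le (by norm_num)]
      have : (0 : ℝ) < 2 ^ s := by positivity
      field_simp
    rw [h2]
    have h3 : 0 < (2 : ℝ) ^ (s - 1) * (x / 2) ^ s := by positivity
    nlinarith [mul_le_mul_of_nonneg_left h1 h3.le]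
  · rintro _ ⟨t, _, rfl⟩
    refine ContinuousAt.continuousWithinAt ?_
    have hp : 0 < x / 2 * Real.exp t := by positivity
    exact (by fun_prop : Continuous fun u : ℝ => Real.exp (-u)).continuousAt.mul
      (Real.continuousAt_rpow_const _ _ (Or.inl hp.ne'))
  · refine hcv.mono_set ?_
    rintro _ ⟨t, _, rfl⟩
    exact (by positivity : 0 < x / 2 * Real.exp t)
  · rw [integrableOn_Ici_iff_integrableOn_Ioi]
    refine IntegrableOn.congr_fun (f := fun t => (x / 2) ^ s * (Real.exp (-(x / 2 * Real.exp t)) * Real.exp (s * t)))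
      (hint.const_mul ((x / 2) ^ s)) ?_ measurableSet_Ioi
    intro t ht
    exact (hpt t (le_of_lt ht)).symm

/-! ### The Wronskian and the conclusion -/

noncomputable def VV (ν x : ℝ) : ℝ :=
  x ^ (ν + 1) * (FF (ν + 1) (x ^ 2 / 4) * besselK (ν + 1) x + (x / 2) * FF (ν + 1 + 1) (x ^ 2 / 4) * besselK ν x)

lemma VV_deriv (ν x : ℝ) (hν : 0 < ν + 1) (hx : 0 < x) : HasDerivAt (VV ν) 0 x := by
  have hq : HasDerivAt (fun y : ℝ => y ^ 2 / 4) (x / 2) x := by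
    convert! (hasDerivAt_pow 2 x).div_const 4 using 1
    simp; ring
  have h1 := (FF_deriv (ν + 1) (x ^ 2 / 4) hν).comp x hq
  have h2 := (FF_deriv (ν + 1 + 1) (x ^ 2 / 4) (by linarith)).comp x hq
  have h3 := ((hasDerivAt_id x).div_const 2).mul h2
  have h4 := besselK_deriv_up ν x hx
  have h5 := besselK_deriv_down ν x hx
  have h6 := Real.hasDerivAt_rpow_const (x := x) (p := ν + 1) (Or.inl hx.ne')
  have h7 := h6.mul ((h1.mul h5).add (h3.mul h4))
  convert! h7 using 1
  have hr := FF_rec (ν + 1) (x ^ 2 / 4) hν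
  simp only [Function.comp, id, Pi.add_apply, Pi.mul_apply]
  rw [hr, Real.rpow_sub_one hx.ne']
  field_simp
  ring

lemma VV_const (ν x y : ℝ) (hν : 0 < ν + 1) (hx : 0 < x) (hy : 0 < y) : VV ν x = VV ν y := by
  refine isOpen_Ioi.is_const_of_deriv_eq_zero (s := Set.Ioi (0 : ℝ)) isPreconnected_Ioi
    (fun z hz => (VV_deriv ν z hν hz).differentiableAt.differentiableWithinAt)
    (fun z hz => (VV_deriv ν z hν hz).deriv) hx hy

lemma VV_lower (ν x : ℝ) (hν : 0 < ν + 1) (hx : 0 < x) : 2 ^ ν ≤ VV ν x := by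
  have hG : 0 < Real.Gamma (ν + 1) := Real.Gamma_pos_of_pos hν
  have hc := (Real.GammaIntegral_convergent hν).continuousWithinAt_Ici_primitive_Ioi
  have hc1 : Filter.Tendsto (fun a : ℝ => ∫ u in Set.Ioi a, Real.exp (-u) * u ^ (ν + 1 - 1)) (nhdsWithin 0 (Set.Ioi 0))
      (nhds (Real.Gamma (ν + 1))) := by
    rw [Real.Gamma_eq_integral hν]
    exact hc.mono_left (nhdsWithin_mono 0 Set.Ioi_subset_Ici_self)
  have hc2 : Filter.Tendsto (fun a : ℝ => 2 ^ ν * Real.exp (-a)) (nhdsWithin 0 (Set.Ioi 0)) (nhds (2 ^ ν)) := by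
    have : Continuous (fun a : ℝ => (2 : ℝ) ^ ν * Real.exp (-a)) := by fun_prop
    have h := this.tendsto 0
    simp only [neg_zero, Real.exp_zero, mul_one] at h
    exact h.mono_left nhdsWithin_le_nhds
  have hc3 := (hc2.mul hc1).mul_const (1 / Real.Gamma (ν + 1))
  have e : 2 ^ ν * Real.Gamma (ν + 1) * (1 / Real.Gamma (ν + 1)) = 2 ^ ν := by field_simp
  rw [e] at hc3
  refine le_of_tendsto hc3 ?_
  filter_upwards [self_mem_nhdsWithin] with a ha
  have ha : 0 < a := ha
  rw [VV_const ν x (2 * a) hν hx (by positivity)]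
  have hl := besselK_lower (ν + 1) (2 * a) hν (by positivity)
  rw [show 2 * a / 2 = a by ring] at hl
  rw [show (2 : ℝ) ^ (ν + 1 - 1) = 2 ^ ν by congr 1; ring] at hl
  have hF := FF_pos (ν + 1) ((2 * a) ^ 2 / 4) hν (by positivity)
  have hF2 := FF_pos (ν + 1 + 1) ((2 * a) ^ 2 / 4) (by linarith) (by positivity)
  have hG2 : 0 < Real.Gamma (ν + 1 + 1) := Real.Gamma_pos_of_pos (by linarith)
  have hF3 : 0 ≤ FF (ν + 1 + 1) ((2 * a) ^ 2 / 4) := le_trans (by positivity) hF2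
  have hK := besselK_nonneg (ν + 1) (2 * a)
  have hK2 := besselK_nonneg ν (2 * a)
  have hGi : 0 < 1 / Real.Gamma (ν + 1) := by positivity
  have hr : 0 < (2 * a) ^ (ν + 1) := by positivity
  unfold VV
  calc _ ≤ (2 * a) ^ (ν + 1) * besselK (ν + 1) (2 * a) * (1 / Real.Gamma (ν + 1)) := by gcongr
    _ ≤ (2 * a) ^ (ν + 1) * besselK (ν + 1) (2 * a) * FF (ν + 1) ((2 * a) ^ 2 / 4) := by gcongr
    _ = (2 * a) ^ (ν + 1) * (FF (ν + 1) ((2 * a) ^ 2 / 4) * besselK (ν + 1) (2 * a) + 0) := by ring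
    _ ≤ _ := by gcongr; positivity

theorem stmt_8 (ν : ℝ) (hν : -(1/2) ≤ ν) (x : ℝ) (hx : 0 < x) :
    x * besselK (ν + 2) x * besselI ν x > 1/2 := by
  have hν1 : 0 < ν + 1 := by linarith
  have hV := VV_lower ν x hν1 hx
  have hab := a_gt_b (ν + 1) (by linarith) x hx
  have hK1 : besselK (ν + 1) x ≤ besselK (ν + 2) x :=
    besselK_mono _ _ x hx (by rw [abs_of_pos hν1, abs_of_pos (by linarith)]; linarith)
  have hK0 : besselK ν x ≤ besselK (ν + 1) x :=
    besselK_mono _ _ x hx (by rw [abs_of_pos hν1, abs_le]; constructor <;> linarith)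
  have hn := besselK_nonneg ν x
  have hG : 0 < Real.Gamma (ν + 1) := Real.Gamma_pos_of_pos hν1
  have hG2 : 0 < Real.Gamma (ν + 1 + 1) := Real.Gamma_pos_of_pos (by linarith)
  have hF : 0 < FF (ν + 1) (x ^ 2 / 4) :=
    lt_of_lt_of_le (by positivity) (FF_pos (ν + 1) (x ^ 2 / 4) hν1 (by positivity))
  have hF2 : 0 < FF (ν + 1 + 1) (x ^ 2 / 4) :=
    lt_of_lt_of_le (by positivity) (FF_pos (ν + 1 + 1) (x ^ 2 / 4) (by linarith) (by positivity))
  rw [besselI_eq_s8 ν x hx]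
  unfold VV at hV
  rw [Real.rpow_add_one hx.ne'] at hV
  rw [Real.div_rpow hx.le (by norm_num)]
  have h2 : (0 : ℝ) < 2 ^ ν := by positivity
  have hxν : 0 < x ^ ν := by positivity
  set A := FF (ν + 1) (x ^ 2 / 4)
  set B := x / 2 * FF (ν + 1 + 1) (x ^ 2 / 4) with hB
  have hBp : 0 < B := by positivity
  set K0 := besselK ν x
  set K1 := besselK (ν + 1) x
  set K2 := besselK (ν + 2) x
  have hK1p : 0 < K1 := by
    rcases (hn.trans hK0).lt_or_eq with h | h
    · exact h
    · exfalso
      have h0 : K0 = 0 := le_antisymm (h ▸ hK0) hn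
      rw [← h, h0] at hV
      simp at hV
      linarith
  have hlt : A * K1 + B * K0 < 2 * (A * K2) := by
    have e1 : B * K0 ≤ B * K1 := by gcongr
    have e2 : B * K1 < A * K1 := by gcongr
    have e3 : A * K1 ≤ A * K2 := by gcongr
    linarith
  have hlt2 : 2 ^ ν < x ^ ν * x * (2 * (A * K2)) := lt_of_le_of_lt hV (by gcongr)
  have e : x * K2 * (x ^ ν / 2 ^ ν * A) = (x ^ ν * x * (2 * (A * K2))) / 2 ^ ν / 2 := by
    field_simp
  rw [e]
  have := (one_lt_div h2).mpr hlt2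
  show 1 / 2 < _
  linarith
end
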